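/- Let n ≥ 4. There exists a simple 2-cycle on [n] over F_2 of size C(n-1,2) + 1 (a Hamiltonian 2-cycle) if and only if n ≡ 0 or 3 (mod 4). -/

import Mathlib

open Finset symmDiff

/-- The vertex set `[n] = {1, …, n}`. -/
def rng (n : ℕ) : Finset ℕ := Finset.Icc 1 n

/-- The set of `d`-simplices (i.e. `(d+1)`-element subsets) on the vertex set `V`. -/
def simplices (V : Finset ℕ) (d : ℕ) : Finset (Finset ℕ) :=
  V.powerset.filter fun σ => σ.card = d + 1

/-- The mod-2 boundary of a set `X` of simplices: the set of faces `τ` of codimension one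
(`|τ| + 1 = |σ|`) contained in an odd number of members of `X`. -/
def bd (X : Finset (Finset ℕ)) : Finset (Finset ℕ) :=
  (X.biUnion fun σ => σ.powerset).filter
    fun τ => Odd (X.filter fun σ => τ ⊆ σ ∧ τ.card + 1 = σ.card).card

/-- A set of simplices is acyclic (a forest) over `F_2` if no nonempty subset has
empty boundary. -/
def IsAcyclic (F : Finset (Finset ℕ)) : Prop :=
  ∀ Y ⊆ F, Y ≠ ∅ → bd Y ≠ ∅

/-- A `d`-hypertree on `V`: a maximal acyclic set of `d`-simplices on `V`. -/
def IsHypertreeOn (V : Finset ℕ) (d : ℕ) (T : Finset (Finset ℕ)) : Prop :=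
  T ⊆ simplices V d ∧ IsAcyclic T ∧
    ∀ G, T ⊆ G → G ⊆ simplices V d → IsAcyclic G → G = T

/-- A simple cycle over `F_2`: a nonempty set with empty boundary, no nonempty proper
subset of which has empty boundary. -/
def IsSimpleCycle (Z : Finset (Finset ℕ)) : Prop :=
  Z ≠ ∅ ∧ bd Z = ∅ ∧ ∀ Y ⊂ Z, Y ≠ ∅ → bd Y ≠ ∅

/-- Collapsibility: `X` can be reduced to `∅` by repeatedly removing a simplex `σ ∈ X`
containing a codimension-one face contained in no other current member of `X`. -/
inductive Collapsible : Finset (Finset ℕ) → Prop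
  | empty : Collapsible ∅
  | step (X : Finset (Finset ℕ)) (σ τ : Finset ℕ) (hσ : σ ∈ X) (hτ : τ ⊆ σ)
      (hcard : τ.card + 1 = σ.card) (huniq : ∀ σ' ∈ X, τ ⊆ σ' → σ' = σ)
      (h : Collapsible (X.erase σ)) : Collapsible X

/-- The cone over `X` with apex `v`. -/
def cone (v : ℕ) (X : Finset (Finset ℕ)) : Finset (Finset ℕ) :=
  X.image (insert v)

/-- The link of the vertex `v` in `X`. -/
def link (v : ℕ) (X : Finset (Finset ℕ)) : Finset (Finset ℕ) :=
  (X.filter fun σ => v ∈ σ).image fun σ => σ.erase v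

/-- `fill Z T`: the subset `F ⊆ T` with `∂F = Z` (when it exists; it is unique when `T`
is a hypertree and `Z` a cycle). -/
noncomputable def fill (Z T : Finset (Finset ℕ)) : Finset (Finset ℕ) :=
  if h : ∃ F, F ⊆ T ∧ bd F = Z then h.choose else ∅

/-- The average filling-volume `μ(T)` of a `d`-hypertree `T` on `[n]`. -/
noncomputable def fillVolAvg (n d : ℕ) (T : Finset (Finset ℕ)) : ℝ :=
  (∑ σ ∈ simplices (rng n) d, ((fill (bd {σ}) T).card : ℝ)) / (n.choose (d + 1) : ℝ)

open Classical in
/-- The cut of `τ` in `T`: the set of `d`-simplices `σ` on `[n]` such that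
`T ⊕ {τ} ⊕ {σ}` is a `d`-hypertree on `[n]`. -/
noncomputable def cut (n d : ℕ) (τ : Finset ℕ) (T : Finset (Finset ℕ)) : Finset (Finset ℕ) :=
  (simplices (rng n) d).filter fun σ => IsHypertreeOn (rng n) d ((T ∆ {τ}) ∆ {σ})

/-!
Every triangle has three edges, and every edge lies in an even number of triangles of a 2-cycle, so
the size of a 2-cycle is even; this excludes `n ≡ 1, 2 (mod 4)`.

Conversely, a hypertree whose boundary is that of a triangle outside it becomes a Hamiltonian cycle
once the triangle is added. Such hypertrees are grown by coning: if `T` is a hypertree on `V` and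
`P` is a Hamiltonian path of `V`, then `T` together with the cone over `P` from a new vertex `v` is
a hypertree, and its boundary is `∂T` plus the closed walk `v P v`. Two steps along well-chosen
paths turn a triangle boundary into a quadrilateral, and two more turn the quadrilateral back into
a triangle, so the number of vertices can grow by 4 at a time, starting from 3 or 4 vertices.
-/

section Boundary

variable {X Y P : Finset (Finset ℕ)} {σ τ : Finset ℕ} {v : ℕ}

/-- The members of `X` that have `τ` as a face of codimension one. -/
def cofaces (X : Finset (Finset ℕ)) (τ : Finset ℕ) : Finset (Finset ℕ) :=
  {σ ∈ X | τ ⊆ σ ∧ #τ + 1 = #σ}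

theorem mem_cofaces : σ ∈ cofaces X τ ↔ σ ∈ X ∧ τ ⊆ σ ∧ #τ + 1 = #σ := mem_filter

theorem mem_bd : τ ∈ bd X ↔ Odd #(cofaces X τ) := by
  simp only [bd, cofaces, mem_filter, mem_biUnion, mem_powerset, and_iff_right_iff_imp]
  intro hodd
  obtain ⟨σ, hσ⟩ := card_pos.1 hodd.pos
  rw [mem_filter] at hσ
  exact ⟨σ, hσ.1, hσ.2.1⟩

theorem mem_bd_singleton : τ ∈ bd {σ} ↔ τ ⊆ σ ∧ #τ + 1 = #σ := by
  rw [mem_bd, cofaces, filter_singleton]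
  split_ifs with h <;> simp [h]

theorem notMem_of_mem_bd (hv : ∀ σ ∈ X, v ∉ σ) (hτ : τ ∈ bd X) : v ∉ τ := by
  obtain ⟨σ, hσ, hτσ⟩ := mem_biUnion.1 (mem_filter.1 hτ).1
  exact fun hvτ ↦ hv σ hσ (mem_powerset.1 hτσ hvτ)

theorem odd_card_symmDiff {α : Type*} [DecidableEq α] (s t : Finset α) :
    Odd #(s ∆ t) ↔ Xor (Odd #s) (Odd #t) := by
  have hcard : #(s ∆ t) + 2 * #(s ∩ t) = #s + #t := by
    rw [symmDiff_def, sup_eq_union, card_union_of_disjoint disjoint_sdiff_sdiff]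
    grind [card_sdiff_add_card_inter, inter_comm]
  grind

theorem bd_symmDiff (X Y : Finset (Finset ℕ)) : bd (X ∆ Y) = bd X ∆ bd Y := by
  ext τ
  have hcofaces : cofaces (X ∆ Y) τ = cofaces X τ ∆ cofaces Y τ := by
    grind [mem_symmDiff, mem_cofaces]
  rw [mem_bd, hcofaces, odd_card_symmDiff, mem_symmDiff, mem_bd, mem_bd, xor_def]

theorem mem_link : τ ∈ link v X ↔ v ∉ τ ∧ insert v τ ∈ X := by
  simp only [link, mem_image, mem_filter]
  constructor
  · rintro ⟨σ, ⟨hσ, hvσ⟩, rfl⟩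
    exact ⟨notMem_erase v σ, by rwa [insert_erase hvσ]⟩
  · rintro ⟨hvτ, hτ⟩
    exact ⟨insert v τ, ⟨hτ, mem_insert_self v τ⟩, erase_insert hvτ⟩

theorem mem_cone (hv : ∀ σ ∈ P, v ∉ σ) : τ ∈ cone v P ↔ v ∈ τ ∧ τ.erase v ∈ P := by
  simp only [cone, mem_image]
  constructor
  · rintro ⟨σ, hσ, rfl⟩
    exact ⟨mem_insert_self v σ, by rwa [erase_insert (hv σ hσ)]⟩
  · rintro ⟨hvτ, hτ⟩
    exact ⟨τ.erase v, hτ, insert_erase hvτ⟩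

theorem card_cone (hv : ∀ σ ∈ P, v ∉ σ) : #(cone v P) = #P :=
  card_image_of_injOn fun σ hσ τ hτ h ↦ by
    rw [← erase_insert (hv σ hσ), ← erase_insert (hv τ hτ), h]

theorem cone_symmDiff (hX : ∀ σ ∈ X, v ∉ σ) (hY : ∀ σ ∈ Y, v ∉ σ) :
    cone v (X ∆ Y) = cone v X ∆ cone v Y := by
  ext τ
  rw [mem_cone (by grind [mem_symmDiff])]
  grind [mem_symmDiff, mem_cone]

theorem link_cone (hv : ∀ σ ∈ P, v ∉ σ) : link v (cone v P) = P := by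
  ext τ
  grind [mem_link, mem_cone, erase_insert]

theorem bd_link (v : ℕ) (X : Finset (Finset ℕ)) : bd (link v X) = link v (bd X) := by
  ext τ
  rw [mem_link, mem_bd, mem_bd]
  by_cases hvτ : v ∈ τ
  · have hnone : cofaces (link v X) τ = ∅ :=
      filter_eq_empty_iff.2 fun σ hσ hτσ ↦ (mem_link.1 hσ).1 (hτσ.1 hvτ)
    simp [hnone, hvτ]
  · have havoid : ∀ σ ∈ cofaces (link v X) τ, v ∉ σ := by grind [mem_link, mem_cofaces]
    have hcone : cofaces X (insert v τ) = cone v (cofaces (link v X) τ) := by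
      ext σ
      rw [mem_cone havoid]
      grind [mem_link, mem_cofaces, insert_erase, card_erase_of_mem]
    rw [hcone, card_cone havoid]
    simp [hvτ]

theorem bd_cone (hv : ∀ σ ∈ P, v ∉ σ) : bd (cone v P) = P ∆ cone v (bd P) := by
  ext τ
  rw [mem_symmDiff, mem_cone fun σ ↦ notMem_of_mem_bd hv]
  by_cases hvτ : v ∈ τ
  · have hmem : τ.erase v ∈ bd P ↔ τ ∈ bd (cone v P) := by
      conv_lhs => rw [← link_cone hv, bd_link, mem_link, insert_erase hvτ]
      simp
    grind
  · have hcofaces : cofaces (cone v P) τ = cone v {σ ∈ P | σ = τ} := by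
      rw [cofaces, cone, filter_image, cone]
      congr 1
      refine filter_congr fun σ hσ ↦ ?_
      rw [subset_insert_iff_of_notMem hvτ, card_insert_of_notMem (hv σ hσ)]
      grind [eq_of_subset_of_card_le]
    rw [mem_bd, hcofaces, card_cone (by grind), filter_eq']
    grind

theorem even_card_of_bd_eq_empty {d : ℕ} (hd : Even d) (hX : ∀ σ ∈ X, #σ = d + 1)
    (hbd : bd X = ∅) : Even #X := by
  have hfaces : ∀ σ ∈ X, #{τ ∈ X.biUnion powerset | τ ⊆ σ ∧ #τ + 1 = #σ} = d + 1 := by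
    intro σ hσ
    have : ({τ ∈ X.biUnion powerset | τ ⊆ σ ∧ #τ + 1 = #σ} : Finset _) = σ.powersetCard d := by
      grind
    rw [this, card_powersetCard, hX σ hσ, Nat.choose_succ_self_right]
  have hincidence : ∑ τ ∈ X.biUnion powerset, #(cofaces X τ) = #X * (d + 1) := by
    rw [← smul_eq_mul, ← sum_const, ← sum_congr rfl hfaces]
    exact sum_card_bipartiteAbove_eq_sum_card_bipartiteBelow _
  have heven : Even (#X * (d + 1)) := by
    rw [← hincidence]
    refine even_sum _ fun τ _ ↦ ?_
    rw [← Nat.not_odd_iff_even, ← mem_bd, hbd]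
    exact notMem_empty τ
  exact (Nat.even_mul.1 heven).resolve_right (by grind)

end Boundary

section Acyclic

variable {F T X Y P : Finset (Finset ℕ)} {σ : Finset ℕ} {v : ℕ}

theorem IsAcyclic.eq_of_bd_eq (hF : IsAcyclic F) (hX : X ⊆ F) (hY : Y ⊆ F) (h : bd X = bd Y) :
    X = Y := by
  rw [← symmDiff_eq_bot, bot_eq_empty]
  by_contra hne
  refine hF (X ∆ Y) (by grind [mem_symmDiff]) hne ?_
  rw [bd_symmDiff, h, symmDiff_self, bot_eq_empty]

theorem IsAcyclic.notMem_of_bd_eq (hT : IsAcyclic T) (hbd : bd T = bd {σ}) (hne : T ≠ {σ}) :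
    σ ∉ T :=
  fun hσ ↦ hne (hT.eq_of_bd_eq Subset.rfl (singleton_subset_iff.2 hσ) hbd)

theorem IsAcyclic.isSimpleCycle_insert (hT : IsAcyclic T) (hσ : σ ∉ T) (hbd : bd T = bd {σ}) :
    IsSimpleCycle (insert σ T) := by
  have hbd_insert {Y : Finset (Finset ℕ)} (hY : σ ∉ Y) : bd (insert σ Y) = bd Y ∆ bd {σ} := by
    rw [← bd_symmDiff]
    congr 1
    grind [mem_symmDiff]
  refine ⟨insert_ne_empty σ T, by simp [hbd_insert hσ, hbd], fun Y hYT hY hcycle ↦ ?_⟩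
  by_cases hσY : σ ∈ Y
  · have hYbd : bd (Y.erase σ) = bd T := by
      rw [← insert_erase hσY, hbd_insert (notMem_erase σ Y)] at hcycle
      rwa [hbd, ← symmDiff_eq_bot]
    have hYeq : Y.erase σ = T := hT.eq_of_bd_eq (by grind) Subset.rfl hYbd
    exact hYT.ne (by rw [← hYeq, insert_erase hσY])
  · exact hT Y ((subset_insert_iff_of_notMem hσY).1 hYT.subset) hY hcycle

theorem isAcyclic_singleton (hσ : σ.Nonempty) : IsAcyclic {σ} := by
  intro Y hY hne
  obtain ⟨a, ha⟩ := hσ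
  rw [(subset_singleton_iff.1 hY).resolve_left hne]
  refine ne_empty_of_mem (a := σ.erase a) (mem_bd_singleton.2 ⟨erase_subset a σ, ?_⟩)
  exact card_erase_add_one ha

theorem IsAcyclic.union_cone (hT : IsAcyclic T) (hP : IsAcyclic P) (hvT : ∀ σ ∈ T, v ∉ σ)
    (hvP : ∀ σ ∈ P, v ∉ σ) : IsAcyclic (T ∪ cone v P) := by
  intro Y hY hne hcycle
  have hlink : link v Y = ∅ := by
    by_contra hlink
    refine hP (link v Y) (by grind [mem_link, mem_cone, erase_insert]) hlink ?_
    rw [bd_link, hcycle]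
    rfl
  refine hT Y (fun σ hσ ↦ (mem_union.1 (hY hσ)).resolve_right fun hσP ↦ ?_) hne hcycle
  have hvσ := ((mem_cone hvP).1 hσP).1
  refine notMem_empty (σ.erase v) (hlink ▸ mem_link.2 ⟨notMem_erase v σ, ?_⟩)
  rwa [insert_erase hvσ]

end Acyclic

section Hypertree

variable {T P : Finset (Finset ℕ)} {V σ : Finset ℕ} {d v : ℕ}

/-- A `d`-hypertree on `V`, recognised by its size: an acyclic set of `d`-simplices on `V` with
the maximum number `C(|V| - 1, d)` of members. -/
structure IsFullForestOn (V : Finset ℕ) (d : ℕ) (T : Finset (Finset ℕ)) : Prop where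
  subset_simplices : T ⊆ simplices V d
  isAcyclic : IsAcyclic T
  card_eq : #T = (#V - 1).choose d

theorem mem_simplices : σ ∈ simplices V d ↔ σ ⊆ V ∧ #σ = d + 1 := by
  rw [simplices, mem_filter, mem_powerset]

theorem notMem_of_subset_simplices (hT : T ⊆ simplices V d) (hv : v ∉ V) : ∀ σ ∈ T, v ∉ σ :=
  fun _ hσ hvσ ↦ hv ((mem_simplices.1 (hT hσ)).1 hvσ)

theorem isFullForestOn_empty (h : #V - 1 < d) : IsFullForestOn V d ∅ where
  subset_simplices := empty_subset _
  isAcyclic _ hY hne := absurd (subset_empty.1 hY) hne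
  card_eq := by rw [card_empty, Nat.choose_eq_zero_of_lt h]

theorem isFullForestOn_vertex (hv : v ∈ V) : IsFullForestOn V 0 {{v}} where
  subset_simplices := by simpa [mem_simplices] using hv
  isAcyclic := isAcyclic_singleton (singleton_nonempty v)
  card_eq := by simp

theorem IsFullForestOn.symmDiff_cone (hT : IsFullForestOn V (d + 1) T)
    (hP : IsFullForestOn V d P) (hV : V.Nonempty) (hv : v ∉ V) :
    IsFullForestOn (insert v V) (d + 1) (T ∆ cone v P) := by
  have hvT := notMem_of_subset_simplices hT.subset_simplices hv
  have hvP := notMem_of_subset_simplices hP.subset_simplices hv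
  have hdisj : Disjoint T (cone v P) := by
    rw [disjoint_left]
    grind [mem_cone]
  rw [hdisj.symmDiff_eq_sup, sup_eq_union]
  refine ⟨union_subset (fun σ hσ ↦ ?_) (fun σ hσ ↦ ?_),
    hT.isAcyclic.union_cone hP.isAcyclic hvT hvP, ?_⟩
  · have := mem_simplices.1 (hT.subset_simplices hσ)
    exact mem_simplices.2 ⟨this.1.trans (subset_insert v V), this.2⟩
  · have ⟨hvσ, hface⟩ := (mem_cone hvP).1 hσ
    have := mem_simplices.1 (hP.subset_simplices hface)
    rw [mem_simplices, subset_insert_iff, ← card_erase_add_one hvσ]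
    exact ⟨this.1, by rw [this.2]⟩
  · obtain ⟨m, hm⟩ : ∃ m, #V = m + 1 := Nat.exists_eq_succ_of_ne_zero hV.card_ne_zero
    rw [card_union_of_disjoint hdisj, card_cone hvP, hT.card_eq, hP.card_eq,
      card_insert_of_notMem hv, hm]
    simp only [Nat.add_sub_cancel, Nat.choose_succ_succ']
    ring

theorem IsFullForestOn.exists_isSimpleCycle (hT : IsFullForestOn V d T) (hσ : σ ∈ simplices V d)
    (hbd : bd T = bd {σ}) (hne : T ≠ {σ}) :
    ∃ Z, Z ⊆ simplices V d ∧ IsSimpleCycle Z ∧ #Z = (#V - 1).choose d + 1 := by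
  have hσT : σ ∉ T := hT.isAcyclic.notMem_of_bd_eq hbd hne
  exact ⟨insert σ T, insert_subset hσ hT.subset_simplices,
    hT.isAcyclic.isSimpleCycle_insert hσT hbd, by rw [card_insert_of_notMem hσT, hT.card_eq]⟩

end Hypertree

section Walk

/-- The mod-2 sum of the edges of the walk through the vertices of `l` in order. -/
def walkEdges : List ℕ → Finset (Finset ℕ)
  | [] => ∅
  | [_] => ∅
  | a :: b :: l => {{a, b}} ∆ walkEdges (b :: l)

theorem walkEdges_pair (a b : ℕ) : walkEdges [a, b] = {{a, b}} :=
  symmDiff_bot _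

theorem walkEdges_append (l₁ : List ℕ) (a : ℕ) (l₂ : List ℕ) :
    walkEdges (l₁ ++ a :: l₂) = walkEdges (l₁ ++ [a]) ∆ walkEdges (a :: l₂) := by
  induction l₁ with
  | nil => exact (bot_symmDiff _).symm
  | cons b l ih =>
    cases l with
    | nil => exact congrArg (· ∆ _) (walkEdges_pair b a).symm
    | cons c l => simpa only [List.cons_append, walkEdges, symmDiff_assoc] using congrArg _ ih

theorem isFullForestOn_walkEdges :
    ∀ {l : List ℕ}, l.Nodup → IsFullForestOn l.toFinset 1 (walkEdges l)
  | [], _ => isFullForestOn_empty zero_lt_one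
  | [_], _ => isFullForestOn_empty zero_lt_one
  | a :: b :: l, hl => by
    have ⟨ha, hbl⟩ := List.nodup_cons.1 hl
    have hb : b ∈ (b :: l).toFinset := by simp
    rw [List.toFinset_cons, walkEdges, symmDiff_comm]
    exact (isFullForestOn_walkEdges hbl).symmDiff_cone (isFullForestOn_vertex hb) ⟨b, hb⟩
      (by rwa [List.mem_toFinset])

theorem bd_edge {a b : ℕ} (h : a ≠ b) : bd {{a, b}} = {{a}} ∆ {{b}} := by
  have hvertex : bd {{b}} = {∅} := by
    ext τ
    rw [mem_bd_singleton]
    grind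
  have hcone : ({{a, b}} : Finset (Finset ℕ)) = cone a {{b}} := rfl
  rw [hcone, bd_cone (by simpa using h), hvertex, symmDiff_comm]
  rfl

theorem bd_walkEdges {a b : ℕ} {l : List ℕ} (h : (a :: (l ++ [b])).Nodup) :
    bd (walkEdges (a :: (l ++ [b]))) = {{a}} ∆ {{b}} := by
  induction l generalizing a with
  | nil => rw [List.nil_append, walkEdges_pair, bd_edge (by simpa using h)]
  | cons c l ih =>
    have hac : a ≠ c := fun hac ↦ (List.nodup_cons.1 h).1 (by simp [hac])
    rw [List.cons_append, walkEdges, bd_symmDiff, bd_edge hac, ih h.of_cons, symmDiff_assoc,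
      symmDiff_symmDiff_cancel_left]

theorem bd_cone_walkEdges {a b v : ℕ} {l : List ℕ} (h : (v :: a :: (l ++ [b])).Nodup) :
    bd (cone v (walkEdges (a :: (l ++ [b])))) = walkEdges (v :: a :: (l ++ [b, v])) := by
  have ⟨hv, hpath⟩ := List.nodup_cons.1 h
  have havoid := notMem_of_subset_simplices (isFullForestOn_walkEdges hpath).subset_simplices
    (by rwa [List.mem_toFinset])
  have hends : cone v ({{a}} ∆ {{b}}) = {{v, a}} ∆ {{b, v}} := by
    rw [cone_symmDiff (by grind) (by grind), pair_comm b v]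
    rfl
  have hclose := walkEdges_append (a :: l) b [v]
  rw [walkEdges_pair, List.cons_append, List.cons_append] at hclose
  rw [bd_cone havoid, bd_walkEdges hpath, hends, walkEdges, hclose, symmDiff_left_comm]

theorem bd_triangle {a b c : ℕ} (h : [a, b, c].Nodup) :
    bd {{a, b, c}} = walkEdges [a, b, c, a] := by
  have hcone : ({{a, b, c}} : Finset (Finset ℕ)) = cone a {{b, c}} := rfl
  rw [hcone, ← walkEdges_pair]
  exact bd_cone_walkEdges (l := []) h

end Walk

section Construction

variable {D : Finset (Finset ℕ)} {B : List ℕ}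

/-- `D` is the boundary of a 2-hypertree on `V`. -/
def IsHypertreeBd (V : Finset ℕ) (D : Finset (Finset ℕ)) : Prop :=
  ∃ T, IsFullForestOn V 2 T ∧ bd T = D

theorem IsHypertreeBd.cons {l p : List ℕ} {a b v : ℕ} (hD : IsHypertreeBd l.toFinset D)
    (hp : l.Perm (a :: (p ++ [b]))) (hl : (v :: l).Nodup) :
    IsHypertreeBd (v :: l).toFinset (D ∆ walkEdges (v :: a :: (p ++ [b, v]))) := by
  obtain ⟨T, hT, rfl⟩ := hD
  have hp' : (v :: a :: (p ++ [b])).Nodup := (hp.cons v).nodup_iff.1 hl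
  have hpath := isFullForestOn_walkEdges (List.nodup_cons.1 hp').2
  rw [← List.toFinset_eq_of_perm _ _ hp] at hpath
  rw [List.toFinset_cons, ← bd_cone_walkEdges hp', ← bd_symmDiff]
  exact ⟨_, hT.symmDiff_cone hpath ⟨a, by simp [hp.mem_iff]⟩ (by simpa using hl.notMem), rfl⟩

theorem IsHypertreeBd.quadrilateral_of_triangle {y w r x p : ℕ}
    (h : IsHypertreeBd (y :: w :: r :: B).toFinset (walkEdges [y, w, r, y]))
    (hnd : (p :: x :: y :: w :: r :: B).Nodup) :
    IsHypertreeBd (p :: x :: y :: w :: r :: B).toFinset (walkEdges [x, w, y, p, x]) := by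
  have hx := h.cons (v := x) (a := w) (p := B ++ [y]) (b := r) (by grind) hnd.of_cons
  have hp := hx.cons (v := p) (a := x) (p := r :: w :: B) (b := y) (by grind) hnd
  convert hp using 1
  -- Both walks traverse the stretch from `w` through `B` to `y`, which cancels mod 2.
  have hsplit_x := walkEdges_append (w :: B) y [r, x]
  have hsplit_p := walkEdges_append (w :: B) y [p]
  simp only [List.cons_append, List.nil_append, List.append_assoc] at hsplit_x hsplit_p ⊢
  simp only [walkEdges, hsplit_x, hsplit_p, ← bot_eq_empty, symmDiff_assoc, symmDiff_comm,
    symmDiff_left_comm, symmDiff_symmDiff_cancel_left, pair_comm]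

theorem IsHypertreeBd.triangle_of_quadrilateral {x w y p s t : ℕ}
    (h : IsHypertreeBd (p :: x :: y :: w :: B).toFinset (walkEdges [x, w, y, p, x]))
    (hnd : (t :: s :: p :: x :: y :: w :: B).Nodup) :
    IsHypertreeBd (t :: s :: p :: x :: y :: w :: B).toFinset (walkEdges [t, p, s, t]) := by
  have hs := h.cons (v := s) (a := p) (p := y :: (B ++ [x])) (b := w) (by grind) hnd.of_cons
  have ht := hs.cons (v := t) (a := s) (p := w :: y :: (B ++ [x])) (b := p) (by grind) hnd
  convert ht using 1
  -- Both walks traverse the stretch from `y` through `B` to `x`, which cancels mod 2.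
  have hsplit_s := walkEdges_append (y :: B) x [w, s]
  have hsplit_t := walkEdges_append (y :: B) x [p, t]
  simp only [List.cons_append, List.nil_append, List.append_assoc] at hsplit_s hsplit_t ⊢
  simp only [walkEdges, hsplit_s, hsplit_t, ← bot_eq_empty, symmDiff_assoc, symmDiff_comm,
    symmDiff_left_comm, symmDiff_symmDiff_cancel_left, pair_comm]

theorem isHypertreeBd_triangle : ∀ {B : List ℕ} {a b c : ℕ}, (a :: b :: c :: B).Nodup →
    B.length % 4 = 0 ∨ B.length % 4 = 1 →
    IsHypertreeBd (a :: b :: c :: B).toFinset (walkEdges [a, b, c, a])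
  | [], a, b, c, hnd, _ => by
    have hcard : #([b, c].toFinset) ≤ 2 := List.toFinset_card_le [b, c]
    have hbase : IsHypertreeBd [b, c].toFinset ∅ := ⟨∅, isFullForestOn_empty (by omega), rfl⟩
    simpa [← bot_eq_empty] using hbase.cons (p := []) (.refl _) hnd
  | [d], a, b, c, hnd, _ => by
    have hbase := isHypertreeBd_triangle (B := []) hnd.of_cons (.inl rfl)
    convert hbase.cons (v := a) (a := b) (p := [d]) (b := c) (by grind) hnd using 1
    simp only [List.cons_append, List.nil_append, walkEdges, ← bot_eq_empty, bot_symmDiff,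
      symmDiff_assoc, symmDiff_comm, symmDiff_left_comm, symmDiff_symmDiff_cancel_left, pair_comm]
  | [_, _], _, _, _, _, hlen => by simp at hlen
  | [_, _, _], _, _, _, _, hlen => by simp at hlen
  | x :: y :: w :: r :: B, a, b, c, hnd, hlen => by
    have hperm : (a :: b :: c :: x :: y :: w :: r :: B).Perm
      (a :: c :: b :: x :: y :: w :: r :: B) := (List.Perm.swap c b _).cons a
    have hnd' := hperm.nodup_iff.1 hnd
    have hlen' : B.length % 4 = 0 ∨ B.length % 4 = 1 := by
      simp only [List.length_cons] at hlen
      omega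
    rw [List.toFinset_eq_of_perm _ _ hperm]
    exact (isHypertreeBd_triangle hnd.of_cons.of_cons.of_cons.of_cons hlen')
      |>.quadrilateral_of_triangle hnd'.of_cons.of_cons |>.triangle_of_quadrilateral hnd'

end Construction

theorem IsHypertreeBd.exists_hamiltonian {V : Finset ℕ} {a b c : ℕ} (hV : 4 ≤ #V)
    (habc : [a, b, c].Nodup) (hsub : {a, b, c} ⊆ V)
    (h : IsHypertreeBd V (walkEdges [a, b, c, a])) :
    ∃ Z, Z ⊆ simplices V 2 ∧ IsSimpleCycle Z ∧ #Z = (#V - 1).choose 2 + 1 := by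
  obtain ⟨T, hT, hbd⟩ := h
  rw [← bd_triangle habc] at hbd
  have hcard : 3 ≤ #T := by
    rw [hT.card_eq]
    exact Nat.choose_le_choose 2 (Nat.le_sub_one_of_lt hV)
  refine hT.exists_isSimpleCycle (mem_simplices.2 ⟨hsub, ?_⟩) hbd ?_
  · simpa using List.toFinset_card_of_nodup habc
  · rintro rfl
    simp at hcard

theorem exists_hamiltonian_two_cycle {V : Finset ℕ} (hV : 4 ≤ #V)
    (hmod : #V % 4 = 0 ∨ #V % 4 = 3) :
    ∃ Z, Z ⊆ simplices V 2 ∧ IsSimpleCycle Z ∧ #Z = (#V - 1).choose 2 + 1 := by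
  obtain ⟨a, b, c, B, hl⟩ : ∃ a b c B, V.toList = a :: b :: c :: B := by
    have hlen := V.length_toList
    match V.toList, hlen with
    | [], hlen | [_], hlen | [_, _], hlen => grind
    | a :: b :: c :: B, _ => exact ⟨a, b, c, B, rfl⟩
  have hnd : (a :: b :: c :: B).Nodup := hl ▸ V.nodup_toList
  have hset : (a :: b :: c :: B).toFinset = V := by rw [← hl, toList_toFinset]
  have hlen : B.length + 3 = #V := by rw [← V.length_toList, hl]; rfl
  have htree := isHypertreeBd_triangle hnd (by omega)
  rw [hset] at htree
  exact htree.exists_hamiltonian hV (by grind) (by simp [← hset, insert_subset_iff])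

theorem odd_choose_two_iff (m : ℕ) : Odd (m.choose 2) ↔ m % 4 = 2 ∨ m % 4 = 3 := by
  rw [Nat.odd_iff]
  induction m with
  | zero => decide
  | succ m ih =>
    have hpascal : (m + 1).choose 2 = m + m.choose 2 := by
      rw [Nat.choose_succ_succ' m 1, Nat.choose_one_right]
    omega

theorem hamiltonian_two_cycle_iff_general (V : Finset ℕ) (hV : 4 ≤ #V) :
    (∃ Z, Z ⊆ simplices V 2 ∧ IsSimpleCycle Z ∧ #Z = (#V - 1).choose 2 + 1) ↔
      (#V % 4 = 0 ∨ #V % 4 = 3) := by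
  refine ⟨fun ⟨Z, hZ, hcycle, hcard⟩ ↦ ?_, exists_hamiltonian_two_cycle hV⟩
  have heven : Even #Z :=
    even_card_of_bd_eq_empty even_two (fun σ hσ ↦ (mem_simplices.1 (hZ hσ)).2) hcycle.2.1
  rw [hcard, Nat.even_add_one, Nat.not_even_iff_odd, odd_choose_two_iff] at heven
  omega

/-- For `n ≥ 4`, a Hamiltonian 2-cycle on `[n]` over `F_2` (a simple 2-cycle of size
`C(n-1,2) + 1`) exists iff `n ≡ 0` or `3 (mod 4)`. -/
theorem hamiltonian_two_cycle_iff (n : ℕ) (hn : 4 ≤ n) :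
    (∃ Z, Z ⊆ simplices (rng n) 2 ∧ IsSimpleCycle Z ∧
        Z.card = (n - 1).choose 2 + 1) ↔ (n % 4 = 0 ∨ n % 4 = 3) := by
  have hcard : #(rng n) = n := by simp [rng]
  simpa only [hcard] using hamiltonian_two_cycle_iff_general (rng n) (by rwa [hcard])
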